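/- Gyires' first limit theorem for block Toeplitz determinants: Let r ≥ 1 and let φ be a continuous function from the unit circle to the r×r complex matrices such that φ(e^{iθ}) is Hermitian positive definite for every θ. For n ≥ 1, let D_n(φ) denote the determinant of the nr×nr block Toeplitz matrix whose (j,k) block, 0 ≤ j, k ≤ n−1, is the r×r matrix Fourier coefficient φ_{j−k} = (1/2π)∫_{-π}^{π} e^{-i(j-k)θ} φ(e^{iθ}) dθ. Then D_n(φ) > 0 for all n, and (1/n)·log D_n(φ) converges, as n → ∞, to (1/2π)∫_0^{2π} log det φ(e^{iθ}) dθ. -/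

import Mathlib

/-!
Write `T_n(φ)` for the block Toeplitz matrix and `V(θ)` for the block row of exponentials
`e^{ikθ} 1`, so that `T_n(φ)` is the mean over the circle of `V(θ)ᴴ φ(θ) V(θ)`, `T_n(1) = 1` and
`V(θ) V(θ)ᴴ = n`. Let `m` be the mean of `log det φ`.

*Positivity.* The quadratic form of `T_n(φ)` at `x` is the mean of that of `φ(θ)` at `V(θ) x`.

*Lower bound.* A Berezin–Jensen inequality gives `n m ≤ log det T_n(φ)` for every `n`. It is used
in tangent-line form (`exists_tangent`): pointwise in `θ`,
`n log det φ(θ) ≤ tr(VᴴV (log T - 1)) + tr(Vᴴ φ(θ) V T⁻¹)` with `T = T_n(φ)`, and the right side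
integrates to `log det T` (`mean_log_det_le`). No logarithm of `φ(θ)` has to be integrated.

*Upper bound.* Let `ψ = φ⁻¹`. From `log det A + log det B ≤ tr(AB) - nr`
(`log_det_add_log_det_le`) with `A = T_n(φ)`, `B = T_n(ψ)`, and the lower bound
`-n m ≤ log det T_n(ψ)`, one gets `log det T_n(φ) ≤ n m + tr(T_n(φ) T_n(ψ)) - nr`. The error is
`o(n)`: by Parseval and Cesàro summation, `n⁻¹ tr(T_n(φ) T_n(ψ))` tends to the mean of
`tr(φψ) = r` (`tendsto_trace_toeplitz_mul`).
-/

open MeasureTheory Filter Topology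
open scoped ComplexOrder

/-- The `ℓ`-th Fourier coefficient of a scalar function `θ ↦ φ(e^{iθ})`. -/
noncomputable def fourierCoeff' (φ : ℝ → ℂ) (ℓ : ℤ) : ℂ :=
  ((2 * Real.pi : ℝ) : ℂ)⁻¹ *
    ∫ θ in (-Real.pi)..Real.pi, Complex.exp (-Complex.I * (ℓ : ℂ) * (θ : ℂ)) * φ θ

/-- The determinant of the `nr × nr` block Toeplitz matrix whose `(j,k)` block is the
`r × r` matrix Fourier coefficient `φ_{j−k}` of a matrix-valued symbol `φ`. -/
noncomputable def blockToeplitzDet {r : ℕ} (φ : ℝ → Matrix (Fin r) (Fin r) ℂ)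
    (n : ℕ) : ℂ :=
  (Matrix.of fun p q : Fin n × Fin r =>
    fourierCoeff' (fun θ => φ θ p.2 q.2) ((p.1 : ℤ) - (q.1 : ℤ))).det

open scoped Matrix

/-! ### Trace inequalities for the log-determinant -/

/-- The spectral theorem for a positive definite matrix, with the unitary factor as a plain
matrix. -/
theorem exists_eigen_decomp {ι : Type*} [Fintype ι] [DecidableEq ι] {A : Matrix ι ι ℂ}
    (hA : A.PosDef) : ∃ (U : Matrix ι ι ℂ) (l : ι → ℝ), U * Uᴴ = 1 ∧ Uᴴ * U = 1 ∧
      (∀ i, 0 < l i) ∧ A = U * Matrix.diagonal (fun i => (l i : ℂ)) * Uᴴ ∧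
      Real.log A.det.re = ∑ i, Real.log (l i) := by
  refine ⟨hA.1.eigenvectorUnitary, hA.1.eigenvalues, ?_, ?_, hA.eigenvalues_pos, ?_, ?_⟩
  · exact Unitary.coe_mul_star_self hA.1.eigenvectorUnitary
  · exact Unitary.coe_star_mul_self hA.1.eigenvectorUnitary
  · have := hA.1.spectral_theorem
    rw [Unitary.conjStarAlgAut_apply] at this
    exact this
  · rw [hA.1.det_eq_prod_eigenvalues, ← Real.log_prod fun i _ => (hA.eigenvalues_pos i).ne']
    congr 1
    have := Complex.ofReal_prod Finset.univ hA.1.eigenvalues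
    simp only [Complex.coe_algebraMap] 
    rw [← Complex.ofReal_re (∏ i, hA.1.eigenvalues i), this]

/-- `tr(Zᴴ diag(m) Z diag(d))` as a weighted double sum with the nonnegative weights `|Z k i|²`. -/
theorem trace_weighted {ι κ : Type*} [Fintype ι] [DecidableEq ι] [Fintype κ] [DecidableEq κ]
    (Z : Matrix κ ι ℂ) (m : κ → ℝ) (d : ι → ℝ) :
    (Zᴴ * Matrix.diagonal (fun k => (m k : ℂ)) * Z * Matrix.diagonal (fun i => (d i : ℂ))).trace.re
      = ∑ k, ∑ i, Complex.normSq (Z k i) * (m k * d i) := by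
  simp only [Matrix.trace, Matrix.diag, Matrix.mul_diagonal, Matrix.mul_apply (N := Z),
    Matrix.conjTranspose_apply, Finset.sum_mul, Complex.re_sum]
  rw [Finset.sum_comm]
  refine Finset.sum_congr rfl fun k _ => Finset.sum_congr rfl fun i _ => ?_
  rw [show star (Z k i) * (m k : ℂ) * Z k i * (d i : ℂ)
    = ((Complex.normSq (Z k i) * (m k * d i) : ℝ) : ℂ) by
      push_cast
      rw [Complex.normSq_eq_conj_mul_self]
      simp only [RCLike.star_def]
      ring]
  exact Complex.ofReal_re _

/-- A tangent-line form of the Berezin–Jensen inequality for the logarithm. If `A = U diag(l) Uᴴ`,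
take `L = log A - 1 = U diag(log l - 1) Uᴴ`. Whenever `V Vᴴ = c • 1`, diagonalizing `P = Q diag(m) Qᴴ` turns both
sides of the inequality into double sums with the common weights `|Z k i|²`, `Z = Qᴴ V U`, whose
rows sum to `c`, and the scalar inequality `log m ≤ log l - 1 + m / l` is applied termwise. -/
theorem exists_tangent {ι : Type*} [Fintype ι] [DecidableEq ι] {A : Matrix ι ι ℂ}
    (hA : A.PosDef) : ∃ L : Matrix ι ι ℂ,
      L.trace.re = Real.log A.det.re - Fintype.card ι ∧
      ∀ {κ : Type} [Fintype κ] [DecidableEq κ] (P : Matrix κ κ ℂ) (_ : P.PosDef)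
        (V : Matrix κ ι ℂ) (c : ℝ) (_ : V * Vᴴ = (c : ℂ) • (1 : Matrix κ κ ℂ)),
        c * Real.log P.det.re ≤ (Vᴴ * V * L).trace.re + (Vᴴ * P * V * A⁻¹).trace.re := by
  obtain ⟨U, l, hU, hU', hl, hAe, hdet⟩ := exists_eigen_decomp hA
  -- the witness is `log A - 1`
  refine ⟨U * Matrix.diagonal (fun i => ((Real.log (l i) - 1 : ℝ) : ℂ)) * Uᴴ, ?_, ?_⟩
  · rw [Matrix.trace_mul_comm, ← Matrix.mul_assoc, hU', Matrix.one_mul, Matrix.trace_diagonal,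
      hdet, ← Complex.ofReal_sum, Complex.ofReal_re]
    simp
  · intro κ _ _ P hP V c hV
    obtain ⟨Q, m, hQ, hQ', hm, hPe, hdetP⟩ := exists_eigen_decomp hP
    have hinv : A⁻¹ = U * Matrix.diagonal (fun i => (((l i)⁻¹ : ℝ) : ℂ)) * Uᴴ := by
      apply Matrix.inv_eq_right_inv
      calc A * (U * Matrix.diagonal (fun i => (((l i)⁻¹ : ℝ) : ℂ)) * Uᴴ)
          = U * (Matrix.diagonal (fun i => (l i : ℂ)) * (Uᴴ * U) *
            Matrix.diagonal (fun i => (((l i)⁻¹ : ℝ) : ℂ))) * Uᴴ := by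
              rw [hAe]; simp only [Matrix.mul_assoc]
        _ = 1 := by
              rw [hU', Matrix.mul_one, Matrix.diagonal_mul_diagonal]
              have : (fun i => (l i : ℂ) * (((l i)⁻¹ : ℝ) : ℂ)) = fun _ => 1 := by
                ext i
                rw [← Complex.ofReal_mul, mul_inv_cancel₀ (hl i).ne', Complex.ofReal_one]
              rw [this, Matrix.diagonal_one, Matrix.mul_one, hU]
    set Z : Matrix κ ι ℂ := Qᴴ * V * U with hZ
    have hZZ : Z * Zᴴ = (c : ℂ) • (1 : Matrix κ κ ℂ) := by
      calc Z * Zᴴ = Qᴴ * (V * (U * Uᴴ) * Vᴴ) * Q := by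
            simp only [hZ, Matrix.conjTranspose_mul, Matrix.conjTranspose_conjTranspose,
              Matrix.mul_assoc]
        _ = _ := by rw [hU, Matrix.mul_one, hV]; simp [hQ']
    have hw : ∀ k, ∑ i, Complex.normSq (Z k i) = c := by
      intro k
      have := congrFun (congrFun hZZ k) k
      simp only [Matrix.mul_apply, Matrix.conjTranspose_apply, RCLike.star_def, Complex.mul_conj,
        Matrix.smul_apply, Matrix.one_apply_eq, smul_eq_mul, mul_one] at this
      exact_mod_cast this
    have h1 : (Vᴴ * V * (U * Matrix.diagonal (fun i => ((Real.log (l i) - 1 : ℝ) : ℂ)) * Uᴴ)).trace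
        = (Zᴴ * Matrix.diagonal (fun _ : κ => ((1 : ℝ) : ℂ)) * Z *
          Matrix.diagonal (fun i => ((Real.log (l i) - 1 : ℝ) : ℂ))).trace := by
      rw [← Matrix.mul_assoc, Matrix.trace_mul_comm]
      congr 1
      calc _ = Uᴴ * Vᴴ * (Q * Qᴴ) * V * U *
            Matrix.diagonal (fun i => ((Real.log (l i) - 1 : ℝ) : ℂ)) := by
              rw [hQ, Matrix.mul_one]; simp only [Matrix.mul_assoc]
        _ = _ := by
              simp only [hZ, Matrix.conjTranspose_mul, Matrix.conjTranspose_conjTranspose,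
                Matrix.mul_assoc, Complex.ofReal_one, Matrix.diagonal_one, Matrix.one_mul]
    have h2 : (Vᴴ * P * V * A⁻¹).trace = (Zᴴ * Matrix.diagonal (fun k => (m k : ℂ)) * Z *
          Matrix.diagonal (fun i => (((l i)⁻¹ : ℝ) : ℂ))).trace := by
      rw [hinv, ← Matrix.mul_assoc, Matrix.trace_mul_comm]
      congr 1
      rw [hPe]
      simp only [hZ, Matrix.conjTranspose_mul, Matrix.conjTranspose_conjTranspose,
                Matrix.mul_assoc]
    rw [h1, h2, trace_weighted, trace_weighted, hdetP, Finset.mul_sum, ← Finset.sum_add_distrib]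
    refine Finset.sum_le_sum fun k _ => ?_
    rw [← hw k, Finset.sum_mul, ← Finset.sum_add_distrib]
    refine Finset.sum_le_sum fun i _ => ?_
    rw [← mul_add]
    refine mul_le_mul_of_nonneg_left ?_ (Complex.normSq_nonneg _)
    have h := Real.log_le_sub_one_of_pos (div_pos (hm k) (hl i))
    rw [Real.log_div (hm k).ne' (hl i).ne', div_eq_mul_inv] at h
    linarith

theorem log_det_inv {ι : Type*} [Fintype ι] [DecidableEq ι] {B : Matrix ι ι ℂ} (hB : B.PosDef) :
    Real.log (B⁻¹).det.re = - Real.log B.det.re := by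
  have hb := hB.det_pos
  rw [Complex.lt_def] at hb
  have hb2 : B.det = (B.det.re : ℂ) := Complex.ext rfl (by simpa using hb.2.symm)
  rw [Matrix.det_nonsing_inv, Ring.inverse_eq_inv', hb2, ← Complex.ofReal_inv, Complex.ofReal_re,
    Complex.ofReal_re, Real.log_inv]

/-- The inequality `log x ≤ x - 1` for the product of two positive definite matrices; it is the
tangent inequality at `B⁻¹`, with `V = 1`. -/
theorem log_det_add_log_det_le {ι : Type} [Fintype ι] [DecidableEq ι] {A B : Matrix ι ι ℂ}
    (hA : A.PosDef) (hB : B.PosDef) :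
    Real.log A.det.re + Real.log B.det.re ≤ (A * B).trace.re - Fintype.card ι := by
  obtain ⟨L, hL, h⟩ := exists_tangent hB.inv
  have h1 := h A hA 1 1 (by simp)
  have hu : IsUnit B.det := hB.det_pos.ne'.isUnit
  simp only [Matrix.conjTranspose_one, Matrix.one_mul, Matrix.mul_one,
    Matrix.nonsing_inv_nonsing_inv B hu, hL, log_det_inv hB] at h1
  linarith

/-! ### Parseval's identity and Cesàro means -/

/-- The normalized mean over the circle of a complex function of the angle; `fourierCoeff' φ l` is
by definition the mean of `e^{-ilθ} φ θ`. -/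
noncomputable def circleMean (f : ℝ → ℂ) : ℂ :=
  ((2 * Real.pi : ℝ) : ℂ)⁻¹ * ∫ θ in (-Real.pi)..Real.pi, f θ

/-- Parseval's identity in bilinear form, obtained from the Fourier Hilbert basis of `L²` of the
circle `ℝ / 2πℤ` applied to `conj g` and `f`. -/
theorem hasSum_fourierCoeff_mul {f g : ℝ → ℂ} (hf : Continuous f) (hg : Continuous g)
    (hfp : Function.Periodic f (2 * Real.pi)) (hgp : Function.Periodic g (2 * Real.pi)) :
    HasSum (fun l : ℤ => fourierCoeff' f l * fourierCoeff' g (-l))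
      (circleMean fun θ => f θ * g θ) := by
  have : Fact (0 < 2 * Real.pi) := ⟨Real.two_pi_pos⟩
  -- both coefficients and inner products are Haar integrals, i.e. means over `[-π, π]`
  have key : ∀ (h : AddCircle (2 * Real.pi) → ℂ),
      ∫ x, h x ∂AddCircle.haarAddCircle = circleMean fun θ => h (θ : AddCircle (2 * Real.pi)) := by
    intro h
    have e := fourierCoeff_eq_intervalIntegral h 0 (-Real.pi)
    simp only [fourierCoeff, neg_zero, fourier_zero, one_smul] at e
    rw [e, circleMean, show -Real.pi + 2 * Real.pi = Real.pi by ring, Complex.real_smul]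
    simp
  have lift : ∀ {h : ℝ → ℂ}, Continuous h → Function.Periodic h (2 * Real.pi) →
      ∃ F : C(AddCircle (2 * Real.pi), ℂ), ∀ θ : ℝ, F (θ : AddCircle (2 * Real.pi)) = h θ := by
    intro h hc hp
    exact ⟨⟨hp.lift, continuous_coinduced_dom.2 hc⟩, fun θ => rfl⟩
  obtain ⟨F, hF⟩ := lift hf hfp
  obtain ⟨G, hG⟩ := lift (Complex.continuous_conj.comp hg) (fun x => by
    show (starRingEnd ℂ) (g _) = (starRingEnd ℂ) (g _); rw [hgp])
  have hs := (fourierBasis (T := 2 * Real.pi)).hasSum_inner_mul_inner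
    (ContinuousMap.toLp 2 AddCircle.haarAddCircle ℂ G)
    (ContinuousMap.toLp 2 AddCircle.haarAddCircle ℂ F)
  rw [coe_fourierBasis] at hs
  simp only [fourierLp, MeasureTheory.ContinuousMap.inner_toLp, key, hF, hG, fourier_coe_apply] at hs
  convert! hs using 1
  · ext l
    rw [mul_comm]
    congr 1
    · rw [fourierCoeff', circleMean]
      congr 2
      ext θ
      simp only [Function.comp, Complex.conj_conj]
      congr 2
      have := Real.pi_ne_zero
      push_cast
      field_simp
    · rw [fourierCoeff', circleMean]
      congr 2
      ext θ
      rw [mul_comm, ← Complex.exp_conj]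
      congr 2
      have := Real.pi_ne_zero
      simp
      field_simp
  · simp

/-- The averages `n⁻¹ ∑_{j,k<n} c (j - k)` tend to `∑ c`: the double sum over `j, k < n` is the sum
over `i < n` of the symmetric partial sums `∑_{|l| ≤ i} c l`, so they are Cesàro means of these. -/
theorem tendsto_toeplitz_sum {c : ℤ → ℂ} {S : ℂ} (h : HasSum c S) :
    Tendsto (fun n : ℕ => (n⁻¹ : ℝ) • ∑ j : Fin n, ∑ k : Fin n, c ((j : ℤ) - (k : ℤ)))
      atTop (𝓝 S) := by
  -- `c 0` is subtracted because the summand at `i = 0` counts it twice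
  have h1 : Tendsto (fun n : ℕ => (∑ i ∈ Finset.range (n + 1), (c i + c (-(i : ℤ)))) - c 0)
      atTop (𝓝 S) := by
    have := (h.nat_add_neg.tendsto_sum_nat.comp (tendsto_add_atTop_nat 1)).sub_const (c 0)
    simpa using this
  refine h1.cesaro_smul.congr fun n => ?_
  congr 1
  have e : ∀ n : ℕ, ∑ j : Fin n, ∑ k : Fin n, c ((j : ℤ) - (k : ℤ))
      = ∑ j ∈ Finset.range n, ∑ k ∈ Finset.range n, c ((j : ℤ) - (k : ℤ)) := by
    intro n
    rw [← Fin.sum_univ_eq_sum_range (fun j => ∑ k ∈ Finset.range n, c ((j : ℤ) - (k : ℤ)))]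
    refine Finset.sum_congr rfl fun j _ => ?_
    rw [← Fin.sum_univ_eq_sum_range (fun k => c ((j : ℤ) - (k : ℤ)))]
  rw [e]
  induction n with
  | zero => simp
  | succ n ih =>
    rw [Finset.sum_range_succ, ih]
    simp only [Finset.sum_range_succ _ n, Finset.sum_add_distrib]
    have a1 : ∑ k ∈ Finset.range n, c ((n : ℤ) - (k : ℤ))
        = ∑ i ∈ Finset.range n, c ((i : ℤ) + 1) := by
      rw [← Finset.sum_range_reflect]
      refine Finset.sum_congr rfl fun k hk => ?_
      have := Finset.mem_range.1 hk
      congr 1; omega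
    have a2 : ∑ k ∈ Finset.range n, c ((k : ℤ) - (n : ℤ))
        = ∑ i ∈ Finset.range n, c (-((i : ℤ) + 1)) := by
      rw [← Finset.sum_range_reflect]
      refine Finset.sum_congr rfl fun k hk => ?_
      have := Finset.mem_range.1 hk
      congr 1; omega
    have b1 : ∑ i ∈ Finset.range n, c (i : ℤ) + c n = ∑ i ∈ Finset.range n, c ((i : ℤ) + 1) + c 0 := by
      rw [← Finset.sum_range_succ (fun i : ℕ => c (i : ℤ)), Finset.sum_range_succ']
      simp
    have b2 : ∑ i ∈ Finset.range n, c (-(i : ℤ)) + c (-(n : ℤ))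
        = ∑ i ∈ Finset.range n, c (-((i : ℤ) + 1)) + c 0 := by
      rw [← Finset.sum_range_succ (fun i : ℕ => c (-(i : ℤ))), Finset.sum_range_succ']
      simp
    rw [a1, a2, sub_self]
    linear_combination b1 + b2

/-! ### Means over the circle -/

/-- The normalized mean over the circle of a real function of the angle. -/
noncomputable def realMean (f : ℝ → ℝ) : ℝ :=
  (2 * Real.pi)⁻¹ * ∫ θ in (-Real.pi)..Real.pi, f θ

theorem circleMean_sum {α : Type*} (s : Finset α) {f : α → ℝ → ℂ} (hf : ∀ i, Continuous (f i)) :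
    circleMean (fun θ => ∑ i ∈ s, f i θ) = ∑ i ∈ s, circleMean (f i) := by
  simp only [circleMean]
  rw [intervalIntegral.integral_finsetSum fun i _ => (hf i).intervalIntegrable _ _, Finset.mul_sum]

theorem circleMean_mul_const (f : ℝ → ℂ) (c : ℂ) :
    circleMean (fun θ => f θ * c) = circleMean f * c := by
  rw [circleMean, circleMean, intervalIntegral.integral_mul_const, mul_assoc]

theorem circleMean_const (c : ℂ) : circleMean (fun _ => c) = c := by
  have := Real.pi_ne_zero
  simp only [circleMean, intervalIntegral.integral_const, Complex.real_smul]
  push_cast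
  field_simp
  ring

theorem circleMean_re {f : ℝ → ℂ} (hf : Continuous f) :
    (circleMean f).re = realMean fun θ => (f θ).re := by
  rw [circleMean, realMean, ← Complex.ofReal_inv, Complex.re_ofReal_mul]
  congr 1
  exact (intervalIntegral.intervalIntegral_re (hf.intervalIntegrable _ _)).symm

theorem star_circleMean (f : ℝ → ℂ) : star (circleMean f) = circleMean fun θ => star (f θ) := by
  rw [circleMean, circleMean, star_mul', RCLike.star_def, ← Complex.ofReal_inv, Complex.conj_ofReal]
  congr 1
  exact (intervalIntegral.intervalIntegral_conj).symm

theorem realMean_mono {f g : ℝ → ℝ} (hf : Continuous f) (hg : Continuous g) (h : ∀ θ, f θ ≤ g θ) :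
    realMean f ≤ realMean g := by
  have := Real.pi_pos
  exact mul_le_mul_of_nonneg_left (intervalIntegral.integral_mono (by linarith)
    (hf.intervalIntegrable _ _) (hg.intervalIntegrable _ _) h) (by positivity)

theorem circleMean_exp {l : ℤ} (hl : l ≠ 0) :
    circleMean (fun θ => Complex.exp (-Complex.I * (l : ℂ) * (θ : ℂ))) = 0 := by
  have hc : -Complex.I * (l : ℂ) ≠ 0 := by simpa using hl
  rw [circleMean, integral_exp_mul_complex hc]
  have : Complex.exp (-Complex.I * l * (Real.pi : ℂ))
      = Complex.exp (-Complex.I * l * ((-Real.pi : ℝ) : ℂ)) := by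
    rw [Complex.exp_eq_exp_iff_exists_int]
    exact ⟨-l, by push_cast; ring⟩
  rw [this]
  simp

/-! ### The block Toeplitz matrix as a mean -/

/-- The block Toeplitz matrix of order `n` of the symbol `φ`, whose determinant is
`blockToeplitzDet φ n`. -/
noncomputable def toeplitzMatrix {r : ℕ} (φ : ℝ → Matrix (Fin r) (Fin r) ℂ) (n : ℕ) :
    Matrix (Fin n × Fin r) (Fin n × Fin r) ℂ :=
  Matrix.of fun p q => fourierCoeff' (fun θ => φ θ p.2 q.2) ((p.1 : ℤ) - (q.1 : ℤ))

/-- The `r × nr` block row `V(θ) = (1, e^{iθ} 1, …, e^{i(n-1)θ} 1)`; the block Toeplitz matrix of `φ`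
is the mean of `V(θ)ᴴ φ(θ) V(θ)`. -/
noncomputable def fourierRow (n r : ℕ) (θ : ℝ) : Matrix (Fin r) (Fin n × Fin r) ℂ :=
  Matrix.of fun a q => if a = q.2 then Complex.exp (Complex.I * (q.1 : ℕ) * θ) else 0

theorem continuous_fourierRow (n r : ℕ) : Continuous (fourierRow n r) := by
  refine continuous_matrix fun a q => ?_
  simp only [fourierRow, Matrix.of_apply]
  split_ifs <;> fun_prop

theorem fourierRow_conj_apply {n r : ℕ} (θ : ℝ) (P : Matrix (Fin r) (Fin r) ℂ)
    (p q : Fin n × Fin r) :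
    ((fourierRow n r θ)ᴴ * P * fourierRow n r θ) p q
      = Complex.exp (-Complex.I * (((p.1 : ℤ) - (q.1 : ℤ) : ℤ) : ℂ) * θ) * P p.2 q.2 := by
  simp only [Matrix.mul_apply, Matrix.conjTranspose_apply, fourierRow, Matrix.of_apply]
  simp only [mul_ite, mul_zero, Finset.sum_ite_eq', Finset.mem_univ, if_true, apply_ite star,
    star_zero, ite_mul, zero_mul]
  rw [RCLike.star_def, ← Complex.exp_conj, mul_right_comm, ← Complex.exp_add]
  congr 2
  simp
  ring

theorem fourierRow_mul_conjTranspose (n r : ℕ) (θ : ℝ) :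
    fourierRow n r θ * (fourierRow n r θ)ᴴ = ((n : ℝ) : ℂ) • (1 : Matrix (Fin r) (Fin r) ℂ) := by
  ext a b
  simp only [Matrix.mul_apply, Matrix.conjTranspose_apply, fourierRow, Matrix.of_apply,
    Fintype.sum_prod_type, Matrix.smul_apply, smul_eq_mul, Matrix.one_apply, apply_ite star,
    star_zero, mul_ite, ite_mul, zero_mul, mul_zero, mul_one]
  have : ∀ x : Fin n, Complex.exp (Complex.I * ((x : ℕ) : ℂ) * θ)
      * (starRingEnd ℂ) (Complex.exp (Complex.I * ((x : ℕ) : ℂ) * θ)) = 1 := by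
    intro x
    rw [← Complex.exp_conj, ← Complex.exp_add]
    simp
  by_cases hab : a = b
  · subst hab
    simp [this]
  · simp [hab]

theorem continuous_fourierRow_conj {n r : ℕ} {φ : ℝ → Matrix (Fin r) (Fin r) ℂ}
    (hφ : Continuous φ) :
    Continuous fun θ => (fourierRow n r θ)ᴴ * φ θ * fourierRow n r θ := by
  have := continuous_fourierRow n r
  exact (this.matrix_conjTranspose.matrix_mul hφ).matrix_mul this

theorem toeplitzMatrix_apply {r n : ℕ} (φ : ℝ → Matrix (Fin r) (Fin r) ℂ) (p q : Fin n × Fin r) :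
    toeplitzMatrix φ n p q
      = circleMean fun θ => ((fourierRow n r θ)ᴴ * φ θ * fourierRow n r θ) p q := by
  simp only [fourierRow_conj_apply]
  rfl

theorem toeplitzMatrix_one (r n : ℕ) :
    toeplitzMatrix (fun _ => (1 : Matrix (Fin r) (Fin r) ℂ)) n = 1 := by
  ext p q
  rw [toeplitzMatrix_apply]
  simp only [fourierRow_conj_apply]
  rw [circleMean_mul_const]
  by_cases h : (p.1 : ℤ) - (q.1 : ℤ) = 0
  · have h1 : p.1 = q.1 := by ext; omega
    simp only [h1, sub_self, Int.cast_zero, mul_zero, zero_mul, Complex.exp_zero,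
      circleMean_const, one_mul, Matrix.one_apply, Prod.ext_iff, true_and]
  · have h1 : p ≠ q := by
      rintro rfl
      simp at h
    rw [circleMean_exp h, zero_mul, Matrix.one_apply_ne h1]

theorem trace_toeplitzMatrix_mul {r n : ℕ} {φ : ℝ → Matrix (Fin r) (Fin r) ℂ} (hφ : Continuous φ)
    (B : Matrix (Fin n × Fin r) (Fin n × Fin r) ℂ) :
    (toeplitzMatrix φ n * B).trace
      = circleMean fun θ => ((fourierRow n r θ)ᴴ * φ θ * fourierRow n r θ * B).trace := by
  have hc := fun p q => (continuous_fourierRow_conj (n := n) hφ).matrix_elem p q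
  simp only [Matrix.trace, Matrix.diag, Matrix.mul_apply (N := B)]
  have hcB := fun p q => (hc p q).mul (continuous_const (y := B q p))
  refine Eq.symm ((circleMean_sum _ fun p => continuous_finsetSum _ fun q _ => hcB p q).trans ?_)
  refine Finset.sum_congr rfl fun p _ => (circleMean_sum _ fun q => hcB p q).trans ?_
  refine Finset.sum_congr rfl fun q _ => ?_
  rw [toeplitzMatrix_apply]
  exact circleMean_mul_const _ _

/-- The quadratic form of the block Toeplitz matrix is the mean of the quadratic forms of the
symbol, evaluated at the vector polynomial `V(θ) x`. -/
theorem dotProduct_toeplitzMatrix_mulVec {r n : ℕ} {φ : ℝ → Matrix (Fin r) (Fin r) ℂ}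
    (hφ : Continuous φ) (x : Fin n × Fin r → ℂ) :
    star x ⬝ᵥ (toeplitzMatrix φ n *ᵥ x)
      = circleMean fun θ => star (fourierRow n r θ *ᵥ x) ⬝ᵥ (φ θ *ᵥ (fourierRow n r θ *ᵥ x)) := by
  have h : ∀ M : Matrix (Fin n × Fin r) (Fin n × Fin r) ℂ,
      star x ⬝ᵥ (M *ᵥ x) = (M * Matrix.vecMulVec x (star x)).trace := by
    intro M
    rw [Matrix.mul_vecMulVec, Matrix.trace_vecMulVec, dotProduct_comm]
  rw [h, trace_toeplitzMatrix_mul hφ]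
  congr 1
  ext θ
  rw [← h, ← Matrix.mulVec_mulVec, ← Matrix.mulVec_mulVec, Matrix.dotProduct_mulVec,
    Matrix.star_mulVec]

theorem posDef_toeplitzMatrix {r : ℕ} {φ : ℝ → Matrix (Fin r) (Fin r) ℂ} (hφ : Continuous φ)
    (hpos : ∀ θ, (φ θ).PosDef) (n : ℕ) : (toeplitzMatrix φ n).PosDef := by
  have hH : (toeplitzMatrix φ n).IsHermitian := by
    ext p q
    rw [Matrix.conjTranspose_apply, toeplitzMatrix_apply, toeplitzMatrix_apply, star_circleMean]
    congr 1
    ext θ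
    exact (Matrix.isHermitian_conjTranspose_mul_mul (fourierRow n r θ) (hpos θ).1).apply p q
  refine .of_dotProduct_mulVec_pos hH fun x hx => ?_
  have hrow : Continuous fun θ => fourierRow n r θ *ᵥ x :=
    (continuous_fourierRow n r).matrix_mulVec continuous_const
  set h : ℝ → ℂ :=
    fun θ => star (fourierRow n r θ *ᵥ x) ⬝ᵥ (φ θ *ᵥ (fourierRow n r θ *ᵥ x)) with hh
  have hcont : Continuous h := hrow.star.dotProduct (hφ.matrix_mulVec hrow)
  have hnn : ∀ θ, 0 ≤ h θ := fun θ => (hpos θ).posSemidef.dotProduct_mulVec_nonneg _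
  have hpi := Real.pi_pos
  -- otherwise `V(θ) x` vanishes identically, and the symbol `1`, whose Toeplitz matrix is `1`,
  -- gives `‖x‖² = 0`
  obtain ⟨θ₀, hθ₀, hne⟩ : ∃ θ ∈ Set.Icc (-Real.pi) Real.pi, fourierRow n r θ *ᵥ x ≠ 0 := by
    by_contra! hzero
    have h1 := dotProduct_toeplitzMatrix_mulVec (r := r) (n := n)
      (φ := fun _ => 1) continuous_const x
    rw [toeplitzMatrix_one, Matrix.one_mulVec, circleMean,
      intervalIntegral.integral_congr (g := fun _ => (0 : ℂ)), intervalIntegral.integral_zero,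
      mul_zero, dotProduct_star_self_eq_zero] at h1
    · exact hx h1
    · intro θ hθ
      rw [Set.uIcc_of_le (by linarith)] at hθ
      simp [hzero θ hθ]
  rw [dotProduct_toeplitzMatrix_mulVec hφ]
  have hreal : circleMean h = ((realMean fun θ => (h θ).re : ℝ) : ℂ) := by
    have : h = fun θ => ((h θ).re : ℂ) := by
      ext θ
      exact Complex.ext rfl (by simpa using (Complex.le_def.1 (hnn θ)).2.symm)
    rw [this, circleMean, intervalIntegral.integral_ofReal, realMean]
    push_cast
    simp
  rw [hreal]
  refine Complex.zero_lt_real.2 (mul_pos (by positivity) ?_)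
  refine intervalIntegral.integral_pos (by linarith)
    (Complex.continuous_re.comp hcont).continuousOn (fun θ _ => (Complex.le_def.1 (hnn θ)).1)
    ⟨θ₀, hθ₀, (Complex.lt_def.1 ((hpos θ₀).dotProduct_mulVec_pos hne)).1⟩

theorem continuous_log_det {r : ℕ} {φ : ℝ → Matrix (Fin r) (Fin r) ℂ} (hφ : Continuous φ)
    (hpos : ∀ θ, (φ θ).PosDef) : Continuous fun θ => Real.log (φ θ).det.re :=
  (Complex.continuous_re.comp hφ.matrix_det).log
    fun θ => (Complex.lt_def.1 (hpos θ).det_pos).1.ne'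

theorem realMean_const_mul (c : ℝ) (f : ℝ → ℝ) :
    realMean (fun θ => c * f θ) = c * realMean f := by
  rw [realMean, realMean, intervalIntegral.integral_const_mul]
  ring

/-- The lower bound, valid for every `n`: integrate the tangent inequality at `A = T_n(φ)` with
`P = φ(θ)`, `V = V(θ)`. The right side becomes `tr (log T_n(φ) - 1) + tr 1 = log det T_n(φ)`. -/
theorem mean_log_det_le {r : ℕ} {φ : ℝ → Matrix (Fin r) (Fin r) ℂ} (hφ : Continuous φ)
    (hpos : ∀ θ, (φ θ).PosDef) (n : ℕ) :
    n * realMean (fun θ => Real.log (φ θ).det.re) ≤ Real.log (toeplitzMatrix φ n).det.re := by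
  have hT := posDef_toeplitzMatrix hφ hpos n
  obtain ⟨L, hL, h⟩ := exists_tangent hT
  have hone : Continuous fun _ : ℝ => (1 : Matrix (Fin r) (Fin r) ℂ) := continuous_const
  have hc1 := ((continuous_fourierRow_conj (n := n) hone).matrix_mul
    (continuous_const (y := L))).matrix_trace
  have hc2 := ((continuous_fourierRow_conj (n := n) hφ).matrix_mul
    (continuous_const (y := (toeplitzMatrix φ n)⁻¹))).matrix_trace
  rw [← realMean_const_mul]
  refine (realMean_mono (continuous_const.mul (continuous_log_det hφ hpos))
    ((Complex.continuous_re.comp hc1).add (Complex.continuous_re.comp hc2)) fun θ => ?_).trans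
    (b := realMean _) ?_
  · simpa using h (φ θ) (hpos θ) _ n (fourierRow_mul_conjTranspose n r θ)
  · have e : ∀ f g : ℝ → ℝ, Continuous f → Continuous g →
        realMean (fun θ => f θ + g θ) = realMean f + realMean g := by
      intro f g hf hg
      rw [realMean, intervalIntegral.integral_add (hf.intervalIntegrable _ _)
        (hg.intervalIntegrable _ _), mul_add, realMean, realMean]
    refine le_of_eq ((e _ _ (Complex.continuous_re.comp hc1)
      (Complex.continuous_re.comp hc2)).trans ?_)
    have e1 := circleMean_re hc1
    have e2 := circleMean_re hc2
    rw [← trace_toeplitzMatrix_mul hone, toeplitzMatrix_one, Matrix.one_mul, hL] at e1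
    rw [← trace_toeplitzMatrix_mul hφ,
      Matrix.mul_nonsing_inv _ hT.det_pos.ne'.isUnit, Matrix.trace_one, Complex.natCast_re] at e2
    simp only [Function.comp_def]
    rw [← e1, ← e2]
    ring

/-! ### The limit theorem -/

/-- `T_n(φ) T_n(ψ)` and `T_n(φ ψ)` have asymptotically the same normalized trace. -/
theorem tendsto_trace_toeplitz_mul {r : ℕ} {φ ψ : ℝ → Matrix (Fin r) (Fin r) ℂ}
    (hφ : Continuous φ) (hψ : Continuous ψ) (hφp : Function.Periodic φ (2 * Real.pi))
    (hψp : Function.Periodic ψ (2 * Real.pi)) :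
    Tendsto (fun n : ℕ => (n⁻¹ : ℝ) • (toeplitzMatrix φ n * toeplitzMatrix ψ n).trace) atTop
      (𝓝 (circleMean fun θ => (φ θ * ψ θ).trace)) := by
  have hab : ∀ a b : Fin r, Tendsto (fun n : ℕ => (n⁻¹ : ℝ) • ∑ j : Fin n, ∑ k : Fin n,
      (fourierCoeff' (fun θ => φ θ a b) ((j : ℤ) - (k : ℤ)) *
        fourierCoeff' (fun θ => ψ θ b a) (-((j : ℤ) - (k : ℤ))))) atTop
      (𝓝 (circleMean fun θ => φ θ a b * ψ θ b a)) := by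
    intro a b
    have hsum := hasSum_fourierCoeff_mul (f := fun θ => φ θ a b) (g := fun θ => ψ θ b a)
      (hφ.matrix_elem a b) (hψ.matrix_elem b a)
      (fun θ => by simp only [hφp θ]) (fun θ => by simp only [hψp θ])
    have h := tendsto_toeplitz_sum hsum
    simpa only using h
  have hlim := tendsto_finsetSum Finset.univ fun a _ =>
    tendsto_finsetSum Finset.univ fun b _ => hab a b
  have hval : (circleMean fun θ => (φ θ * ψ θ).trace)
      = ∑ a, ∑ b, circleMean fun θ => φ θ a b * ψ θ b a := by
    have hc := fun a b => (hφ.matrix_elem a b).mul (hψ.matrix_elem b a)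
    simp only [Matrix.trace, Matrix.diag, Matrix.mul_apply]
    refine (circleMean_sum _ fun a => continuous_finsetSum _ fun b _ => hc a b).trans ?_
    exact Finset.sum_congr rfl fun a _ => circleMean_sum _ fun b => hc a b
  rw [hval]
  refine hlim.congr fun n => ?_
  simp only [← Finset.smul_sum]
  congr 1
  simp only [Matrix.trace, Matrix.diag, Matrix.mul_apply, toeplitzMatrix, Matrix.of_apply,
    Fintype.sum_prod_type, neg_sub]
  calc _ = ∑ a : Fin r, ∑ j : Fin n, ∑ k : Fin n, ∑ b : Fin r,
        (fourierCoeff' (fun θ => φ θ a b) ((j : ℤ) - (k : ℤ)) *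
          fourierCoeff' (fun θ => ψ θ b a) ((k : ℤ) - (j : ℤ))) := by
        refine Finset.sum_congr rfl fun a _ => ?_
        rw [Finset.sum_comm]
        refine Finset.sum_congr rfl fun j _ => ?_
        rw [Finset.sum_comm]
    _ = _ := Finset.sum_comm

theorem continuous_matrix_inv_of_posDef {r : ℕ} {φ : ℝ → Matrix (Fin r) (Fin r) ℂ}
    (hφ : Continuous φ) (hpos : ∀ θ, (φ θ).PosDef) : Continuous fun θ => (φ θ)⁻¹ := by
  simp only [Matrix.inv_def, Ring.inverse_eq_inv']
  exact (hφ.matrix_det.inv₀ fun θ => (hpos θ).det_pos.ne').smul hφ.matrix_adjugate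

/-- **Gyires' first limit theorem for block Toeplitz determinants.** If `φ` is a
continuous, pointwise Hermitian positive definite `r × r` matrix-valued symbol on the
unit circle, then `D_n(φ) > 0` and
`(1/n) log D_n(φ) → (1/2π) ∫_0^{2π} log det φ(e^{iθ}) dθ`. -/
theorem gyires_block_toeplitz
    (r : ℕ) (hr : 1 ≤ r) (φ : ℝ → Matrix (Fin r) (Fin r) ℂ)
    (hcont : Continuous φ) (hper : Function.Periodic φ (2 * Real.pi))
    (hpos : ∀ θ : ℝ, (φ θ).PosDef) :
    (∀ n : ℕ, 1 ≤ n → 0 < (blockToeplitzDet φ n).re ∧ (blockToeplitzDet φ n).im = 0) ∧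
    Tendsto (fun n : ℕ => Real.log ((blockToeplitzDet φ n).re) / n)
      atTop
      (𝓝 ((2 * Real.pi)⁻¹ *
        ∫ θ in (0 : ℝ)..(2 * Real.pi), Real.log (((φ θ).det).re))) := by
  have hdet : ∀ n, blockToeplitzDet φ n = (toeplitzMatrix φ n).det := fun n => rfl
  simp only [hdet]
  refine ⟨fun n _ => ?_, ?_⟩
  · have := Complex.lt_def.1 (posDef_toeplitzMatrix hcont hpos n).det_pos
    exact ⟨this.1, this.2.symm⟩
  have hmean : (2 * Real.pi)⁻¹ * ∫ θ in (0 : ℝ)..(2 * Real.pi), Real.log (((φ θ).det).re)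
      = realMean fun θ => Real.log (φ θ).det.re := by
    have hp : Function.Periodic (fun θ => Real.log (φ θ).det.re) (2 * Real.pi) :=
      fun θ => by simp only [hper θ]
    have := hp.intervalIntegral_add_eq 0 (-Real.pi)
    rw [zero_add, show -Real.pi + 2 * Real.pi = Real.pi by ring] at this
    rw [realMean, this]
  rw [hmean]
  set m := realMean fun θ => Real.log (φ θ).det.re with hm
  set ψ : ℝ → Matrix (Fin r) (Fin r) ℂ := fun θ => (φ θ)⁻¹ with hψ
  have hψc : Continuous ψ := continuous_matrix_inv_of_posDef hcont hpos
  have hψpos : ∀ θ, (ψ θ).PosDef := fun θ => (hpos θ).inv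
  have hψm : realMean (fun θ => Real.log (ψ θ).det.re) = -m := by
    simp only [hψ, log_det_inv (hpos _)]
    rw [hm, ← neg_one_mul, ← realMean_const_mul]
    simp only [neg_one_mul]
  have htr := tendsto_trace_toeplitz_mul hcont hψc hper (fun θ => by simp only [hψ, hper θ])
  have hone : ∀ θ, φ θ * ψ θ = 1 := fun θ =>
    Matrix.mul_nonsing_inv _ (hpos θ).det_pos.ne'.isUnit
  simp only [hone, Matrix.trace_one, Fintype.card_fin, circleMean_const] at htr
  have htr' : Tendsto (fun n : ℕ => m +
      (((n⁻¹ : ℝ) • (toeplitzMatrix φ n * toeplitzMatrix ψ n).trace).re - r)) atTop (𝓝 m) := by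
    have := ((Complex.continuous_re.tendsto _).comp htr).sub_const (r : ℝ) |>.const_add m
    simpa using this
  -- squeeze between `m` and `m + (n⁻¹ tr(T_n(φ) T_n(ψ)) - r)`
  refine tendsto_of_tendsto_of_tendsto_of_le_of_le' tendsto_const_nhds htr' ?_ ?_
  · filter_upwards [eventually_ge_atTop 1] with n hn
    have hn' : (0 : ℝ) < n := by exact_mod_cast hn
    rw [le_div_iff₀ hn', mul_comm]
    exact mean_log_det_le hcont hpos n
  · filter_upwards [eventually_ge_atTop 1] with n hn
    have hn' : (0 : ℝ) < n := by exact_mod_cast hn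
    have h1 := log_det_add_log_det_le (posDef_toeplitzMatrix hcont hpos n)
      (posDef_toeplitzMatrix hψc hψpos n)
    have h2 := mean_log_det_le hψc hψpos n
    rw [hψm] at h2
    simp only [Fintype.card_prod, Fintype.card_fin, Nat.cast_mul] at h1
    rw [div_le_iff₀ hn', Complex.smul_re, smul_eq_mul]
    have : (m + ((n : ℝ)⁻¹ * (toeplitzMatrix φ n * toeplitzMatrix ψ n).trace.re - r)) * n
        = m * n + (toeplitzMatrix φ n * toeplitzMatrix ψ n).trace.re - n * r := by
      field_simp
      ring
    rw [this]
    linarith
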